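/- arXiv:2602.14379 — 6 statements merged into one kernel-verified Lean document; each statement's English description precedes it below -/
import Mathlib

section
/- Let n and d be integers with 1 ≤ d < n. Every vector ψ in the span of the computational basis vectors e_x with wt(x) = d satisfies H_stab ψ = 0, and every vector ψ ∈ ℂ^{2^n} orthogonal to that span satisfies ⟨ψ, H_stab ψ⟩ ≥ ‖ψ‖². In particular, the ground space of H_stab is exactly the span of the weight-d computational basis states and any orthogonal unit vector has energy at least 1. -/
open Matrix Finset

/-- Hamming weight of a bit string. -/
def wt {n : ℕ} (x : Fin n → Fin 2) : ℕ := (Finset.univ.filter fun i => x i = 1).card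

/-- Diagonal projector `Π_S`: the `(x,x)` entry is `1` iff `x i = 1` for all `i ∈ S`. -/
def projOn {n : ℕ} (S : Finset (Fin n)) : Matrix (Fin n → Fin 2) (Fin n → Fin 2) ℂ :=
  Matrix.diagonal fun x => if ∀ i ∈ S, x i = 1 then 1 else 0

/-- `H_{>d} := ∑_{|S| = d+1} Π_S`. -/
noncomputable def Hgt (n d : ℕ) : Matrix (Fin n → Fin 2) (Fin n → Fin 2) ℂ :=
  ∑ S ∈ Finset.powersetCard (d + 1) (Finset.univ : Finset (Fin n)), projOn S

/-- `H_{<d} := ∑_{|S| = d} (I − Π_S)`. -/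
noncomputable def Hlt (n d : ℕ) : Matrix (Fin n → Fin 2) (Fin n → Fin 2) ℂ :=
  ∑ S ∈ Finset.powersetCard d (Finset.univ : Finset (Fin n)), (1 - projOn S)

/-- `H_stab := C(n,d)·H_{>d} + H_{<d} − (C(n,d) − 1)·I`. -/
noncomputable def Hstab (n d : ℕ) : Matrix (Fin n → Fin 2) (Fin n → Fin 2) ℂ :=
  (n.choose d : ℂ) • Hgt n d + Hlt n d - ((n.choose d : ℂ) - 1) • 1

/-- Standard basis vector `e_x` of `ℂ^{2^n}`. -/
noncomputable def e {n : ℕ} (x : Fin n → Fin 2) : (Fin n → Fin 2) → ℂ := Pi.single x 1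

/-- Standard Hermitian inner product on `ℂ^{2^n}`. -/
noncomputable def hinner {n : ℕ} (ψ φ : (Fin n → Fin 2) → ℂ) : ℂ := ∑ x, star (ψ x) * φ x

/-!
`Hstab n d` is diagonal in the computational basis. A string of weight `w` contains `C(w,k)`
subsets of size `k` in its support, so its energy is `C(n,d) * C(w,d+1) + 1 - C(w,d)`. This
vanishes at `w = d`. For `w < d` both coefficients in `w` vanish and the energy is `1`; for
`d < w ≤ n` the penalty satisfies `C(n,d) * C(w,d+1) ≥ C(n,d) ≥ C(w,d)`, so the energy is at
least `1`.
-/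

theorem filter_forall_mem_powersetCard {α : Type*} (p : α → Prop) [DecidablePred p]
    [DecidablePred fun t : Finset α => ∀ a ∈ t, p a] (s : Finset α) (k : ℕ) :
    {t ∈ powersetCard k s | ∀ a ∈ t, p a} = powersetCard k {a ∈ s | p a} := by
  ext t
  simp only [mem_filter, mem_powersetCard, subset_iff]
  grind

section DiagonalMatrix

variable {ι 𝕜 : Type*} [Fintype ι] [DecidableEq ι]

theorem diagonal_mulVec_eq_zero_of_mem_span [CommSemiring 𝕜] {f : ι → 𝕜} {s : Set (ι → 𝕜)}
    (hs : ∀ v ∈ s, ∃ i, f i = 0 ∧ v = Pi.single i 1) {ψ : ι → 𝕜}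
    (hψ : ψ ∈ Submodule.span 𝕜 s) : diagonal f *ᵥ ψ = 0 := by
  have hle : Submodule.span 𝕜 s ≤ LinearMap.ker (diagonal f).mulVecLin := by
    refine Submodule.span_le.mpr fun v hv => ?_
    obtain ⟨i, hi, rfl⟩ := hs v hv
    simp [hi]
  exact hle hψ

variable [RCLike 𝕜]

theorem re_star_dotProduct_diagonal_mulVec (f : ι → ℝ) (ψ : ι → 𝕜) :
    RCLike.re (star ψ ⬝ᵥ diagonal (fun i => (f i : 𝕜)) *ᵥ ψ) = ∑ i, f i * ‖ψ i‖ ^ 2 := by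
  rw [dotProduct, map_sum]
  refine sum_congr rfl fun i _ => ?_
  rw [mulVec_diagonal, Pi.star_apply, mul_left_comm, RCLike.star_def, RCLike.conj_mul,
    ← RCLike.ofReal_pow, ← RCLike.ofReal_mul, RCLike.ofReal_re]

theorem mul_sum_norm_sq_le_re_star_dotProduct_diagonal_mulVec {c : ℝ} {f : ι → ℝ} {ψ : ι → 𝕜}
    (hf : ∀ i, ψ i ≠ 0 → c ≤ f i) :
    c * ∑ i, ‖ψ i‖ ^ 2 ≤ RCLike.re (star ψ ⬝ᵥ diagonal (fun i => (f i : 𝕜)) *ᵥ ψ) := by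
  rw [re_star_dotProduct_diagonal_mulVec, mul_sum]
  refine sum_le_sum fun i _ => ?_
  rcases eq_or_ne (ψ i) 0 with hi | hi
  · simp [hi]
  · exact mul_le_mul_of_nonneg_right (hf i hi) (sq_nonneg _)

end DiagonalMatrix

theorem choose_le_choose_mul_choose_succ {n d w : ℕ} (hwn : w ≤ n) (hwd : w ≠ d) :
    w.choose d ≤ n.choose d * w.choose (d + 1) := by
  rcases hwd.lt_or_gt with hlt | hgt
  · simp [Nat.choose_eq_zero_of_lt hlt]
  · calc w.choose d ≤ n.choose d := Nat.choose_le_choose d hwn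
      _ ≤ n.choose d * w.choose (d + 1) := Nat.le_mul_of_pos_right _ (Nat.choose_pos hgt)

/-- The eigenvalue of `Hstab n d` on the basis vectors of Hamming weight `w`. -/
def stabEnergy (n d w : ℕ) : ℝ := n.choose d * w.choose (d + 1) + 1 - w.choose d

theorem stabEnergy_self (n d : ℕ) : stabEnergy n d d = 0 := by
  simp [stabEnergy]

theorem one_le_stabEnergy {n d w : ℕ} (hwn : w ≤ n) (hwd : w ≠ d) : 1 ≤ stabEnergy n d w := by
  have hchoose : (w.choose d : ℝ) ≤ n.choose d * w.choose (d + 1) :=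
    mod_cast choose_le_choose_mul_choose_succ hwn hwd
  rw [stabEnergy]
  linarith

theorem wt_le {n : ℕ} (x : Fin n → Fin 2) : wt x ≤ n :=
  card_finset_fin_le _

theorem sum_powersetCard_projOn (n k : ℕ) :
    ∑ S ∈ powersetCard k (univ : Finset (Fin n)), projOn S =
      diagonal fun x => ((wt x).choose k : ℂ) := by
  simp only [projOn, ← diagonalAddMonoidHom_apply, ← map_sum]
  congr 1
  ext x
  rw [Finset.sum_apply, sum_boole, filter_forall_mem_powersetCard, card_powersetCard, wt]

theorem Hlt_eq_diagonal (n d : ℕ) :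
    Hlt n d = diagonal fun x => (n.choose d - (wt x).choose d : ℂ) := by
  rw [Hlt, sum_sub_distrib, sum_powersetCard_projOn, sum_const, card_powersetCard, card_univ,
    Fintype.card_fin, ← diagonal_one, ← diagonal_smul, diagonal_sub]
  simp

theorem Hstab_eq_diagonal (n d : ℕ) :
    Hstab n d = diagonal fun x => (stabEnergy n d (wt x) : ℂ) := by
  rw [Hstab, Hgt, sum_powersetCard_projOn, Hlt_eq_diagonal, ← diagonal_one, ← diagonal_smul,
    ← diagonal_smul, diagonal_add, diagonal_sub]
  congr 1
  ext x
  simp only [stabEnergy, Pi.smul_apply, smul_eq_mul]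
  push_cast
  ring

theorem hinner_eq_star_dotProduct {n : ℕ} (ψ φ : (Fin n → Fin 2) → ℂ) :
    hinner ψ φ = star ψ ⬝ᵥ φ :=
  rfl

theorem hinner_e_left {n : ℕ} (x : Fin n → Fin 2) (ψ : (Fin n → Fin 2) → ℂ) :
    hinner (e x) ψ = ψ x := by
  rw [hinner_eq_star_dotProduct, e, ← Pi.single_star, star_one, single_one_dotProduct]

theorem stmt0 (n d : ℕ) (hd1 : 1 ≤ d) (hdn : d < n) :
    (∀ ψ : (Fin n → Fin 2) → ℂ,
        ψ ∈ Submodule.span ℂ {v : (Fin n → Fin 2) → ℂ | ∃ x, wt x = d ∧ v = e x} →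
        (Hstab n d).mulVec ψ = 0) ∧
    (∀ ψ : (Fin n → Fin 2) → ℂ,
        (∀ φ ∈ Submodule.span ℂ {v : (Fin n → Fin 2) → ℂ | ∃ x, wt x = d ∧ v = e x},
          hinner φ ψ = 0) →
        (hinner ψ ((Hstab n d).mulVec ψ)).re ≥ ∑ x, ‖ψ x‖ ^ 2) := by
  rw [Hstab_eq_diagonal]
  refine ⟨fun ψ hψ => ?_, fun ψ hψ => ?_⟩
  · refine diagonal_mulVec_eq_zero_of_mem_span ?_ hψ
    rintro _ ⟨x, hx, rfl⟩
    exact ⟨x, by rw [hx, stabEnergy_self, Complex.ofReal_zero], rfl⟩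
  · have hψd : ∀ x, wt x = d → ψ x = 0 := fun x hx => by
      rw [← hinner_e_left x ψ]
      exact hψ _ (Submodule.subset_span ⟨x, hx, rfl⟩)
    have henergy : ∀ x, ψ x ≠ 0 → 1 ≤ stabEnergy n d (wt x) := fun x hx =>
      one_le_stabEnergy (wt_le x) (mt (hψd x) hx)
    rw [← one_mul (∑ x, ‖ψ x‖ ^ 2), hinner_eq_star_dotProduct]
    exact mul_sum_norm_sq_le_re_star_dotProduct_diagonal_mulVec henergy
end

section
/- Let n, d, T be integers with 1 ≤ d < n and let S_0, S_1, …, S_T be pairwise distinct d-element subsets of Fin n with |S_{t−1} ∩ S_t| = d − 1 for every 1 ≤ t ≤ T. Then for every 1 ≤ t ≤ T and every 0 ≤ t' ≤ T: F_t e_{γ_{t'}} = e_{γ_t} if t' = t − 1, and F_t e_{γ_{t'}} = 0 otherwise. -/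
open Matrix Finset

/-- Indicator string `1_S` of a subset `S ⊆ Fin n`. -/
def clockState {n : ℕ} (S : Finset (Fin n)) : Fin n → Fin 2 := fun i => if i ∈ S then 1 else 0

/-- The forward operator `F_t` determined by the consecutive subsets `Sprev = S_{t-1}` and
`Scur = S_t`: its `(x,y)` entry is the product over positions `i` of the `(x i, y i)` entry of
`|0⟩⟨1|` if `i ∈ Sprev \ Scur`, of `|1⟩⟨0|` if `i ∈ Scur \ Sprev`, of `|1⟩⟨1|` if
`i ∈ Sprev ∩ Scur`, and of the identity otherwise. -/
noncomputable def Fop {n : ℕ} (Sprev Scur : Finset (Fin n)) :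
    Matrix (Fin n → Fin 2) (Fin n → Fin 2) ℂ :=
  Matrix.of fun x y => ∏ i : Fin n,
    if i ∈ Sprev \ Scur then (if x i = 0 ∧ y i = 1 then (1 : ℂ) else 0)
    else if i ∈ Scur \ Sprev then (if x i = 1 ∧ y i = 0 then 1 else 0)
    else if i ∈ Sprev ∩ Scur then (if x i = 1 ∧ y i = 1 then 1 else 0)
    else (if x i = y i then 1 else 0)

/-!
Each tensor factor of `Fop P C` is a 0-1 matrix with at most one nonzero entry in each column, so
the operator sends every basis state `e (clockState A)` to a basis state or to `0`. The factors at
the positions of `P` kill every state whose string is `0` there, so a nonzero image requires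
`P ⊆ A`. Distinct sets of the same size form an antichain, and hence only `A = P` survives.
-/

section

variable {n : ℕ}

theorem fop_apply_clockState (P C A : Finset (Fin n)) (x : Fin n → Fin 2) :
    Fop P C x (clockState A) =
      if (P ⊆ A ∧ Disjoint (C \ P) A) ∧ x = clockState (A \ P ∪ C) then 1 else 0 := by
  have factor_eq (i : Fin n) :
      (if i ∈ P \ C then (if x i = 0 ∧ clockState A i = 1 then (1 : ℂ) else 0)
        else if i ∈ C \ P then (if x i = 1 ∧ clockState A i = 0 then 1 else 0)
        else if i ∈ P ∩ C then (if x i = 1 ∧ clockState A i = 1 then 1 else 0)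
        else (if x i = clockState A i then 1 else 0)) =
      if ((i ∈ P → i ∈ A) ∧ (i ∈ C \ P → i ∉ A)) ∧ x i = clockState (A \ P ∪ C) i
        then 1 else 0 := by
    by_cases hP : i ∈ P <;> by_cases hC : i ∈ C <;> by_cases hA : i ∈ A <;>
      simp [clockState, hP, hC, hA]
  simp only [Fop, Matrix.of_apply, factor_eq, prod_boole, mem_univ, true_imp_iff, forall_and,
    subset_iff, disjoint_left, funext_iff]

theorem fop_mulVec_e_clockState (P C A : Finset (Fin n)) :
    Fop P C *ᵥ e (clockState A) =
      if P ⊆ A ∧ Disjoint (C \ P) A then e (clockState (A \ P ∪ C)) else 0 := by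
  ext x
  calc (Fop P C *ᵥ e (clockState A)) x = Fop P C x (clockState A) :=
        congrFun (mulVec_single_one _ _) x
    _ = if (P ⊆ A ∧ Disjoint (C \ P) A) ∧ x = clockState (A \ P ∪ C) then 1 else 0 :=
        fop_apply_clockState P C A x
    _ = (if P ⊆ A ∧ Disjoint (C \ P) A then e (clockState (A \ P ∪ C)) else 0) x := by
        rw [ite_and, ite_apply, e, Pi.single_apply, Pi.zero_apply]

theorem fop_mulVec_e_clockState_self (P C : Finset (Fin n)) :
    Fop P C *ᵥ e (clockState P) = e (clockState C) := by
  rw [fop_mulVec_e_clockState, if_pos ⟨Subset.rfl, sdiff_disjoint⟩, sdiff_self, bot_eq_empty,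
    empty_union]

theorem fop_mulVec_e_clockState_of_not_subset {P A : Finset (Fin n)} (C : Finset (Fin n))
    (h : ¬P ⊆ A) : Fop P C *ᵥ e (clockState A) = 0 := by
  rw [fop_mulVec_e_clockState, if_neg fun hA => h hA.1]

theorem stmt5_general {ι : Type*} [DecidableEq ι] {S : ι → Finset (Fin n)} {I : Set ι}
    (hinj : I.InjOn S) (hanti : IsAntichain (· ⊆ ·) (S '' I)) {i k : ι} (hi : i ∈ I) (hk : k ∈ I)
    (C : Finset (Fin n)) :
    Fop (S i) C *ᵥ e (clockState (S k)) = if k = i then e (clockState C) else 0 := by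
  split_ifs with h
  · rw [h, fop_mulVec_e_clockState_self]
  · refine fop_mulVec_e_clockState_of_not_subset C fun hsub => h ?_
    exact hinj hk hi (hanti.eq ⟨i, hi, rfl⟩ ⟨k, hk, rfl⟩ hsub).symm

end

theorem stmt5 (n d T : ℕ) (hd1 : 1 ≤ d) (hdn : d < n)
    (S : ℕ → Finset (Fin n))
    (hcard : ∀ t ≤ T, (S t).card = d)
    (hdist : ∀ t ≤ T, ∀ t' ≤ T, S t = S t' → t = t')
    (hadj : ∀ t, 1 ≤ t → t ≤ T → (S (t - 1) ∩ S t).card = d - 1)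
    (t : ℕ) (ht1 : 1 ≤ t) (htT : t ≤ T) (t' : ℕ) (ht' : t' ≤ T) :
    (Fop (S (t - 1)) (S t)).mulVec (e (clockState (S t'))) =
      if t' = t - 1 then e (clockState (S t)) else 0 := by
  have hanti : IsAntichain (· ⊆ ·) (S '' Set.Iic T) :=
    Set.Sized.isAntichain (Set.forall_mem_image.2 hcard)
  exact stmt5_general (fun i hi j hj => hdist i hi j hj) hanti
    ((Nat.sub_le t 1).trans htT) ht' (S t)
end

section
/- Let n, d, T be integers with 1 ≤ d < n and let S_0, S_1, …, S_T be pairwise distinct d-element subsets of Fin n with |S_{t−1} ∩ S_t| = d − 1 for every 1 ≤ t ≤ T. Then for every 1 ≤ t ≤ T and every 0 ≤ t' ≤ T, the conjugate transpose of F_t satisfies: F_t† e_{γ_{t'}} = e_{γ_{t−1}} if t' = t, and F_t† e_{γ_{t'}} = 0 otherwise. -/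
open Matrix Finset

/-! Each tensor factor of `F_t†` maps a basis bit to a basis bit or to `0`, so `F_t†` sends a basis
vector to a basis vector or to `0`, and it kills `e_{1_C}` unless `S_t ⊆ C`. Among sets of equal
size, this inclusion forces `C = S_t`. -/

theorem Fop_clockState_apply {n : ℕ} (A B C : Finset (Fin n)) (y : Fin n → Fin 2) :
    Fop A B (clockState C) y =
      if (B ⊆ C ∧ Disjoint (A \ B) C) ∧ y = clockState (A ∪ C \ B) then 1 else 0 := by
  have factor_eq (i : Fin n) :
      (if i ∈ A \ B then (if clockState C i = 0 ∧ y i = 1 then (1 : ℂ) else 0)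
        else if i ∈ B \ A then (if clockState C i = 1 ∧ y i = 0 then 1 else 0)
        else if i ∈ A ∩ B then (if clockState C i = 1 ∧ y i = 1 then 1 else 0)
        else (if clockState C i = y i then 1 else 0)) =
      if ((i ∈ B → i ∈ C) ∧ (i ∈ A \ B → i ∉ C)) ∧ y i = clockState (A ∪ C \ B) i
        then 1 else 0 := by
    by_cases hA : i ∈ A <;> by_cases hB : i ∈ B <;> by_cases hC : i ∈ C <;>
      simp [clockState, hA, hB, hC, eq_comm]
  simp only [Fop, Matrix.of_apply, factor_eq, Finset.prod_ite_zero, Finset.prod_const_one,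
    Finset.mem_univ, true_imp_iff, forall_and, Finset.subset_iff, Finset.disjoint_left,
    funext_iff]

theorem conjTranspose_Fop_mulVec_clockState {n : ℕ} (A B C : Finset (Fin n)) :
    (Fop A B)ᴴ *ᵥ e (clockState C) =
      if B ⊆ C ∧ Disjoint (A \ B) C then e (clockState (A ∪ C \ B)) else 0 := by
  ext y
  have entry_eq : ((Fop A B)ᴴ *ᵥ e (clockState C)) y = star (Fop A B (clockState C) y) := by
    rw [e, Matrix.mulVec_single_one, Matrix.col_apply, Matrix.conjTranspose_apply]
  rw [entry_eq, Fop_clockState_apply, ite_and]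
  split_ifs <;> simp [e, *]

theorem isAntichain_preimage_subset_of_card_eq {ι α : Type*} {S : ι → Finset α} {I : Set ι}
    {d : ℕ} (hcard : ∀ t ∈ I, #(S t) = d) (hinj : I.InjOn S) :
    IsAntichain (S ⁻¹'o (· ⊆ ·)) I := fun t ht t' ht' hne hsub =>
  hne <| hinj ht ht' <| Finset.eq_of_subset_of_card_le hsub <| by rw [hcard t ht, hcard t' ht']

theorem stmt6_general {n : ℕ} {ι : Type*} [DecidableEq ι] {S : ι → Finset (Fin n)} {I : Set ι}
    (hS : IsAntichain (S ⁻¹'o (· ⊆ ·)) I) (A : Finset (Fin n)) {t t' : ι}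
    (ht : t ∈ I) (ht' : t' ∈ I) :
    (Fop A (S t))ᴴ *ᵥ e (clockState (S t')) = if t' = t then e (clockState A) else 0 := by
  rw [conjTranspose_Fop_mulVec_clockState]
  split_ifs with hsub heq heq
  · rw [heq, Finset.sdiff_self, Finset.union_empty]
  · exact absurd (hS.eq ht ht' hsub.1).symm heq
  · subst heq
    exact absurd ⟨Finset.Subset.rfl, Finset.sdiff_disjoint⟩ hsub
  · rfl

theorem stmt6 (n d T : ℕ) (hd1 : 1 ≤ d) (hdn : d < n)
    (S : ℕ → Finset (Fin n))
    (hcard : ∀ t ≤ T, (S t).card = d)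
    (hdist : ∀ t ≤ T, ∀ t' ≤ T, S t = S t' → t = t')
    (hadj : ∀ t, 1 ≤ t → t ≤ T → (S (t - 1) ∩ S t).card = d - 1)
    (t : ℕ) (ht1 : 1 ≤ t) (htT : t ≤ T) (t' : ℕ) (ht' : t' ≤ T) :
    (Fop (S (t - 1)) (S t))ᴴ.mulVec (e (clockState (S t'))) =
      if t' = t then e (clockState (S (t - 1))) else 0 :=
  stmt6_general (isAntichain_preimage_subset_of_card_eq (I := Set.Iic T) hcard
    fun a ha b hb => hdist a ha b hb) (S (t - 1)) htT ht'
end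

section
/- Let a ≥ 1 and B ≥ 1 be integers and set T := B·(a+1) − 1. Define g on {0, 1, …, T} by g(t) := (⌊t/(a+1)⌋, min(m, 2a+1−m)) where m := t mod (2a+2). Then g is a bijection from {0, 1, …, T} onto {0, 1, …, B−1} × {0, 1, …, a}. -/
/-- The combined clock map: `g t = (t / (a+1), min m (2a+1−m))` where `m = t % (2a+2)`. -/
def g (a : ℕ) (t : ℕ) : ℕ × ℕ :=
  (t / (a + 1), min (t % (2 * a + 2)) (2 * a + 1 - t % (2 * a + 2)))

/-!
Write `t = (a + 1) * q + r` with `r ≤ a`. The coarse clock of `g a t` shows `q`, and the unary clock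
shows `r` on the upward sweeps (`q` even) and `a - r` on the downward ones (`q` odd). So `g a` is
division with remainder by `a + 1` followed, for each fixed `q`, by a bijection of `{0, …, a}`.
-/

theorem bijOn_prodShear {α β γ : Type*} {f : α → β → γ} {s : Set α} {t : Set β} {u : Set γ}
    (hf : ∀ x ∈ s, Set.BijOn (f x) t u) :
    Set.BijOn (fun p : α × β ↦ (p.1, f p.1 p.2)) (s ×ˢ t) (s ×ˢ u) := by
  refine ⟨?mapsTo, ?injOn, ?surjOn⟩
  case mapsTo => exact fun p ⟨hx, hy⟩ ↦ ⟨hx, (hf p.1 hx).mapsTo hy⟩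
  case injOn =>
    rintro ⟨x, y⟩ ⟨hx, hy⟩ ⟨x', y'⟩ ⟨-, hy'⟩ heq
    obtain ⟨rfl, hfy⟩ := Prod.mk.inj heq
    exact congrArg (Prod.mk x) ((hf x hx).injOn hy hy' hfy)
  case surjOn =>
    rintro ⟨x, z⟩ ⟨hx, hz⟩
    obtain ⟨y, hy, rfl⟩ := (hf x hx).surjOn hz
    exact ⟨(x, y), ⟨hx, hy⟩, rfl⟩

theorem bijOn_div_mod (B : ℕ) {n : ℕ} (hn : 0 < n) :
    Set.BijOn (fun t ↦ (t / n, t % n)) (Set.Iio (B * n)) (Set.Iio B ×ˢ Set.Iio n) := by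
  have hinv : Set.InvOn (fun p : ℕ × ℕ ↦ n * p.1 + p.2) (fun t ↦ (t / n, t % n))
      (Set.Iio (B * n)) (Set.Iio B ×ˢ Set.Iio n) := by
    refine ⟨fun t _ ↦ Nat.div_add_mod t n, fun ⟨q, r⟩ ⟨_, hr⟩ ↦ ?_⟩
    exact Prod.ext_iff.mpr ((Nat.div_mod_unique hn).mpr ⟨add_comm _ _, hr⟩)
  refine hinv.bijOn (fun t ht ↦ ⟨(Nat.div_lt_iff_lt_mul hn).mpr ht, Nat.mod_lt t hn⟩) ?_
  rintro ⟨q, r⟩ ⟨hq, hr⟩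
  calc n * q + r < n * q + n := Nat.add_lt_add_left hr _
    _ = (q + 1) * n := by ring
    _ ≤ B * n := Nat.mul_le_mul_right n hq

/-- The value of the unary clock after `r` steps of its `q`-th sweep over `{0, …, a}`: sweeps are
numbered from `0`, and the even ones go upwards. -/
def sweep (a q r : ℕ) : ℕ :=
  if Even q then r else a - r

theorem sweep_le {a r : ℕ} (q : ℕ) (hr : r ≤ a) : sweep a q r ≤ a := by
  unfold sweep
  split_ifs <;> omega

theorem sweep_sweep {a r : ℕ} (q : ℕ) (hr : r ≤ a) : sweep a q (sweep a q r) = r := by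
  unfold sweep
  split_ifs <;> omega

theorem bijOn_sweep (a q : ℕ) : Set.BijOn (sweep a q) (Set.Iic a) (Set.Iic a) :=
  Set.InvOn.bijOn ⟨fun _ ↦ sweep_sweep q, fun _ ↦ sweep_sweep q⟩
    (fun _ ↦ sweep_le q) (fun _ ↦ sweep_le q)

theorem g_eq_sweep (a t : ℕ) : g a t = (t / (a + 1), sweep a (t / (a + 1)) (t % (a + 1))) := by
  have hmod : t % (2 * a + 2) = t % (a + 1) + (a + 1) * (t / (a + 1) % 2) := by
    rw [← Nat.mod_mul, show (a + 1) * 2 = 2 * a + 2 by ring]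
  have hr : t % (a + 1) < a + 1 := Nat.mod_lt t a.succ_pos
  unfold g sweep
  rw [hmod]
  congr 1
  split_ifs with hq
  · rw [Nat.even_iff.mp hq]
    omega
  · rw [Nat.not_even_iff.mp hq]
    omega

theorem stmt13 (a B : ℕ) (ha : 1 ≤ a) (hB : 1 ≤ B) :
    Set.BijOn (g a) (Set.Iic (B * (a + 1) - 1)) (Set.Iio B ×ˢ Set.Iic a) := by
  have hdom : Set.Iic (B * (a + 1) - 1) = Set.Iio (B * (a + 1)) :=
    Set.Iic_sub_one_eq_Iio_of_not_isMin (not_isMin_of_lt (Nat.mul_pos hB a.succ_pos))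
  have hdivMod : Set.BijOn (fun t ↦ (t / (a + 1), t % (a + 1)))
      (Set.Iio (B * (a + 1))) (Set.Iio B ×ˢ Set.Iic a) := by
    rw [← Set.Iio_add_one_eq_Iic]
    exact bijOn_div_mod B a.succ_pos
  rw [hdom]
  exact ((bijOn_prodShear fun q _ ↦ bijOn_sweep a q).comp hdivMod).congr
    fun t _ ↦ (g_eq_sweep a t).symm
end

section
/- Let n ≥ 1. For positions i < j in Fin n, let Π^{01}_{ij} be the diagonal 2^n × 2^n projector whose (x,x) entry is 1 iff x i = 0 and x j = 1, and let H_clock := ∑_{i<j} Π^{01}_{ij}. Then for every string x : Fin n → Fin 2: the diagonal entry (H_clock)_{xx} equals 0 if x is unary, and (H_clock)_{xx} ≥ 1 if x is not unary. -/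
open Matrix Finset

/-- Diagonal projector `Π^{01}_{ij}`: the `(x,x)` entry is `1` iff `x i = 0` and `x j = 1`. -/
noncomputable def proj01 {n : ℕ} (i j : Fin n) :
    Matrix (Fin n → Fin 2) (Fin n → Fin 2) ℂ :=
  Matrix.diagonal fun x => if x i = 0 ∧ x j = 1 then 1 else 0

/-- `H_clock := ∑_{i<j} Π^{01}_{ij}`. -/
noncomputable def Hclock (n : ℕ) : Matrix (Fin n → Fin 2) (Fin n → Fin 2) ℂ :=
  ∑ i : Fin n, ∑ j ∈ Finset.univ.filter (fun j => i < j), proj01 i j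

/-- A string is unary if it is of the form `1^t 0^{n−t}`. -/
def IsUnary {n : ℕ} (x : Fin n → Fin 2) : Prop :=
  ∃ t ≤ n, ∀ i : Fin n, (x i = 1 ↔ (i : ℕ) < t)

/-!
`Hclock` is diagonal, and its entry at `x` counts the pairs `i < j` with `x i < x j`. No such pair
exists exactly when `x` is antitone, i.e. when the positions carrying a `1` form a lower set of
`Fin n`, and the lower sets of `Fin n` are the initial segments `{i | i < t}`.
-/

/-- The pairs of positions at which `x` strictly increases. For a binary string these are the
violations penalised by the clock Hamiltonian: a `0` standing to the left of a `1`. -/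
def ascendingPairs {ι α : Type*} [Fintype ι] [Preorder ι] [DecidableLT ι] [Preorder α]
    [DecidableLT α] (x : ι → α) : Finset (ι × ι) :=
  {p | p.1 < p.2 ∧ x p.1 < x p.2}

theorem ascendingPairs_eq_empty_iff_antitone {ι α : Type*} [Fintype ι] [PartialOrder ι]
    [DecidableLT ι] [LinearOrder α] {x : ι → α} : ascendingPairs x = ∅ ↔ Antitone x := by
  simp only [ascendingPairs, Finset.filter_eq_empty_iff, Finset.mem_univ, forall_const,
    Prod.forall, not_and, not_lt, antitone_iff_forall_lt]

theorem isLowerSet_iff_exists_mem_iff_val_lt {n : ℕ} {s : Set (Fin n)} :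
    IsLowerSet s ↔ ∃ t ≤ n, ∀ i : Fin n, i ∈ s ↔ (i : ℕ) < t := by
  constructor
  · intro hs
    obtain rfl | ⟨k, rfl⟩ := hs.eq_univ_or_Iio
    · exact ⟨n, le_rfl, fun i => iff_of_true (Set.mem_univ i) i.isLt⟩
    · exact ⟨k, k.isLt.le, fun _ => Fin.lt_def⟩
  · rintro ⟨t, -, ht⟩ i j hji hi
    exact (ht j).2 (lt_of_le_of_lt hji ((ht i).1 hi))

theorem isLowerSet_setOf_eq_one_iff_antitone {ι : Type*} [Preorder ι] {x : ι → Fin 2} :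
    IsLowerSet {i | x i = 1} ↔ Antitone x := by
  have le_iff_imp : ∀ a b : Fin 2, (a = 1 → b = 1) ↔ a ≤ b := by decide
  simp only [isLowerSet_setOfPred, Antitone, le_Prop_eq, le_iff_imp]

theorem isUnary_iff_antitone {n : ℕ} {x : Fin n → Fin 2} : IsUnary x ↔ Antitone x :=
  isLowerSet_iff_exists_mem_iff_val_lt.symm.trans isLowerSet_setOf_eq_one_iff_antitone

theorem isUnary_iff_ascendingPairs_eq_empty {n : ℕ} {x : Fin n → Fin 2} :
    IsUnary x ↔ ascendingPairs x = ∅ :=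
  isUnary_iff_antitone.trans ascendingPairs_eq_empty_iff_antitone.symm

theorem Hclock_eq_diagonal_card_ascendingPairs (n : ℕ) :
    Hclock n = Matrix.diagonal fun x => (#(ascendingPairs x) : ℂ) := by
  have zero_one_iff_lt : ∀ a b : Fin 2, a = 0 ∧ b = 1 ↔ a < b := by decide
  ext x y
  obtain rfl | hxy := eq_or_ne x y
  · rw [Matrix.diagonal_apply_eq]
    calc Hclock n x x = ∑ i, ∑ j with i < j, if x i < x j then (1 : ℂ) else 0 := by
          simp only [Hclock, proj01, Matrix.sum_apply, Matrix.diagonal_apply_eq, zero_one_iff_lt]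
      _ = #(ascendingPairs x) := by
          simp only [ascendingPairs, Finset.natCast_card_filter, Fintype.sum_prod_type, ite_and,
            Finset.sum_filter]
  · simp only [Hclock, proj01, Matrix.sum_apply, Matrix.diagonal_apply_ne _ hxy,
      Finset.sum_const_zero]

theorem stmt16 (n : ℕ) (hn : 1 ≤ n) (x : Fin n → Fin 2) :
    (IsUnary x → Hclock n x x = 0) ∧
    (¬ IsUnary x → ∃ r : ℝ, 1 ≤ r ∧ Hclock n x x = (r : ℂ)) := by
  rw [Hclock_eq_diagonal_card_ascendingPairs, Matrix.diagonal_apply_eq,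
    isUnary_iff_ascendingPairs_eq_empty]
  constructor
  · intro hempty
    rw [hempty, Finset.card_empty, Nat.cast_zero]
  · intro hne
    have hcard : 1 ≤ #(ascendingPairs x) :=
      Finset.one_le_card.2 (Finset.nonempty_iff_ne_empty.2 hne)
    exact ⟨#(ascendingPairs x), Nat.one_le_cast.2 hcard, (Complex.ofReal_natCast _).symm⟩
end

section
/- Let n ≥ 2 and 1 ≤ t ≤ n − 1. Let C_t be the diagonal 2^n × 2^n projector whose (x,x) entry is 1 iff x (t−1) = 1 and x t = 0 (the projector |10⟩⟨10| on positions t−1 and t, identity elsewhere). Then C_t e_{γ^u_t} = e_{γ^u_t}, and for every string y : Fin n → Fin 2 with y ≠ γ^u_t, Π_legal (C_t e_y) = 0. -/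
open Matrix Finset

/-- The unary clock string `γ^u_t = 1^t 0^{n−t}`. -/
def gammaU (n t : ℕ) : Fin n → Fin 2 := fun i => if (i : ℕ) < t then 1 else 0

/-- `Π_legal`: the orthogonal projection onto the span of the unary clock basis states
`{e_{γ^u_t} : 0 ≤ t ≤ n}`, written as the sum of the rank-one projectors
`|γ^u_t⟩⟨γ^u_t|`. -/
noncomputable def PiLegal (n : ℕ) : Matrix (Fin n → Fin 2) (Fin n → Fin 2) ℂ :=
  ∑ t ∈ Finset.range (n + 1), Matrix.vecMulVec (e (gammaU n t)) (star (e (gammaU n t)))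

/-- `C_t`: the diagonal projector `|10⟩⟨10|` on positions `t−1` and `t`, identity
elsewhere; its `(x,x)` entry is `1` iff `x (t−1) = 1` and `x t = 0`. -/
noncomputable def Cop (n t : ℕ) (ht1 : 1 ≤ t) (ht : t < n) :
    Matrix (Fin n → Fin 2) (Fin n → Fin 2) ℂ :=
  Matrix.diagonal fun x => if x ⟨t - 1, by omega⟩ = 1 ∧ x ⟨t, ht⟩ = 0 then 1 else 0

/-!
On the unary clock states, position `t - 1` holds `1` and position `t` holds `0` only when the
single descent of `1^s 0^(n - s)` sits between them, that is, when `s = t`. So `C_t` fixes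
`e_{γ^u_t}`, and any other string that it keeps is not a clock state, hence is annihilated by
`Π_legal`.
-/

section ClockStrings

variable {n t : ℕ} {i : Fin n}

theorem gammaU_eq_one_iff : gammaU n t i = 1 ↔ (i : ℕ) < t := by
  simp [gammaU]

theorem gammaU_eq_zero_iff : gammaU n t i = 0 ↔ t ≤ (i : ℕ) := by
  simp [gammaU]

theorem gammaU_eq_one_and_eq_zero_iff {s : ℕ} (ht1 : 1 ≤ t) (ht : t < n) :
    gammaU n s ⟨t - 1, by omega⟩ = 1 ∧ gammaU n s ⟨t, ht⟩ = 0 ↔ s = t := by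
  simp only [gammaU_eq_one_iff, gammaU_eq_zero_iff]
  omega

end ClockStrings

section LegalProjection

variable {n : ℕ}

theorem star_e_dotProduct (x : Fin n → Fin 2) (v : (Fin n → Fin 2) → ℂ) :
    star (e x) ⬝ᵥ v = v x := by
  rw [e, ← Pi.single_star, star_one, single_one_dotProduct]

theorem e_apply_of_ne {x y : Fin n → Fin 2} (h : x ≠ y) : e y x = 0 :=
  Pi.single_eq_of_ne h 1

theorem PiLegal_mulVec (v : (Fin n → Fin 2) → ℂ) :
    PiLegal n *ᵥ v = ∑ s ∈ range (n + 1), v (gammaU n s) • e (gammaU n s) := by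
  simp only [PiLegal, sum_mulVec, vecMulVec_mulVec, star_e_dotProduct, op_smul_eq_smul]

theorem PiLegal_mulVec_e_eq_zero {y : Fin n → Fin 2} (hy : ∀ s ≤ n, gammaU n s ≠ y) :
    PiLegal n *ᵥ e y = 0 := by
  rw [PiLegal_mulVec]
  refine sum_eq_zero fun s hs => ?_
  rw [e_apply_of_ne (hy s (mem_range_succ_iff.mp hs)), zero_smul]

end LegalProjection

theorem Cop_mulVec_e {n t : ℕ} (ht1 : 1 ≤ t) (ht : t < n) (y : Fin n → Fin 2) :
    Cop n t ht1 ht *ᵥ e y =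
      if y ⟨t - 1, by omega⟩ = 1 ∧ y ⟨t, ht⟩ = 0 then e y else 0 := by
  rw [Cop, e, diagonal_mulVec_single, mul_one]
  split_ifs
  · rfl
  · exact Pi.single_zero y

theorem stmt19 (n t : ℕ) (hn : 2 ≤ n) (ht1 : 1 ≤ t) (ht : t ≤ n - 1) :
    (Cop n t ht1 (by omega)).mulVec (e (gammaU n t)) = e (gammaU n t) ∧
    ∀ y : Fin n → Fin 2, y ≠ gammaU n t →
      (PiLegal n).mulVec ((Cop n t ht1 (by omega)).mulVec (e y)) = 0 := by
  have ht' : t < n := by omega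
  refine ⟨?_, fun y hy => ?_⟩
  · rw [Cop_mulVec_e, if_pos ((gammaU_eq_one_and_eq_zero_iff ht1 ht').mpr rfl)]
  · rw [Cop_mulVec_e]
    split_ifs with hkept
    · refine PiLegal_mulVec_e_eq_zero fun s _ hs => hy ?_
      subst hs
      rw [(gammaU_eq_one_and_eq_zero_iff ht1 ht').mp hkept]
    · exact mulVec_zero _
end
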